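/- Let n ≥ 8, let p be a prime, and let k ∈ ℕ satisfy p^k > 2^{2n}. Let F̃ be a finite field with p^{2k} elements, let F be its subfield with p^k elements, and let β ∈ F̃ \ F. Then there exists α = (α_1,…,α_n) ∈ F^n such that every polynomial f ∈ F̃[x_1,…,x_n] satisfying f(a)·(Σ_i α_i a_i − β) = 1 for all a ∈ {0,1}^n has sparsity at least 2^{n/4 − 1}. -/

import Mathlib

/-!
Möbius inversion on the Boolean lattice shows that the alternating sum `∑_{T ⊆ S} (-1)^|T| f(1_T)`
only sees the monomials of `f` whose set of variables is exactly `S`. If `f` agrees with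
`1 / (∑ αᵢ xᵢ - β)` on the cube, this sum depends only on `α`, `β` and `S`, so it suffices to
choose `α` making it nonzero for each of the `2 ^ n` sets `S`: then `f` has a monomial for each.

Such an `α` is chosen one coordinate at a time. Once the coordinates in `s` are fixed, giving a new
index `a` the value `t` turns the sum at `S ∪ {a}`, for `S ⊆ s`, into a constant minus
`∑_{T ⊆ S} (-1)^|T| / (t + ∑_T α - β)`. If no nonempty subset sum of `α` vanishes, the pole of this
rational function at `t = β` does not cancel, so `S` excludes at most `2 ^ |S|` values of `t`.
Over all `S ⊆ s` that is `3 ^ |s|` values, and `2 * 2 ^ |s|` more are excluded to keep the subset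
sums away from `0` and `β`; this is at most `3 ^ (|s| + 1)` in total.
-/

section AlternatingSubsetSums

open Finset

variable {ι R : Type*}

/-- The alternating sum `∑_{T ⊆ S} (-1)^|T| g T`, that is, `(-1)^|S|` times the Möbius transform of
`g` on the Boolean lattice. -/
def altSubsetSum [Ring R] (S : Finset ι) (g : Finset ι → R) : R :=
  ∑ T ∈ S.powerset, (-1) ^ #T * g T

theorem altSubsetSum_congr [Ring R] {S : Finset ι} {g h : Finset ι → R}
    (hgh : ∀ T ⊆ S, g T = h T) : altSubsetSum S g = altSubsetSum S h :=
  sum_congr rfl fun T hT ↦ by rw [hgh T (mem_powerset.mp hT)]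

theorem altSubsetSum_insert [Ring R] [DecidableEq ι] {a : ι} {S : Finset ι} (ha : a ∉ S)
    (g : Finset ι → R) :
    altSubsetSum (insert a S) g = altSubsetSum S g - altSubsetSum S fun T ↦ g (insert a T) := by
  simp only [altSubsetSum]
  rw [sum_powerset_insert ha, sub_eq_add_neg, ← sum_neg_distrib]
  congr 1
  refine sum_congr rfl fun T hT ↦ ?_
  have haT : a ∉ T := fun h ↦ ha (mem_powerset.mp hT h)
  rw [card_insert_of_notMem haT, pow_succ, mul_neg_one, neg_mul]

theorem sum_mul_indicator_one [NonAssocSemiring R] [Fintype ι] (α : ι → R) (T : Finset ι) :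
    ∑ i, α i * (T : Set ι).indicator 1 i = ∑ i ∈ T, α i := by
  classical
  simp [Set.indicator_apply]

theorem prod_indicator_pow_eq_ite [CommSemiring R] [DecidableEq ι] (e : ι →₀ ℕ) (T : Finset ι) :
    ∏ i ∈ e.support, (T : Set ι).indicator (1 : ι → R) i ^ e i =
      if e.support ⊆ T then 1 else 0 := by
  split_ifs with hT
  · exact prod_eq_one fun i hi ↦ by simp [hT hi]
  · obtain ⟨i, hi, hiT⟩ := not_subset.mp hT
    exact prod_eq_zero hi (by simp [hiT, Finsupp.mem_support_iff.mp hi])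

theorem altSubsetSum_subset_indicator_eq_zero [Ring R] [DecidableEq ι] {E S : Finset ι}
    (hES : E ≠ S) : altSubsetSum S (fun T ↦ if E ⊆ T then (1 : R) else 0) = 0 := by
  by_cases hE : E ⊆ S
  · obtain ⟨a, haS, haE⟩ := not_subset.mp fun hSE ↦ hES (hE.antisymm hSE)
    rw [← insert_erase haS, altSubsetSum_insert (notMem_erase a S)]
    simp only [subset_insert_iff_of_notMem haE, sub_self]
  · refine sum_eq_zero fun T hT ↦ ?_
    have hET : ¬E ⊆ T := fun h ↦ hE (h.trans (mem_powerset.mp hT))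
    simp only [if_neg hET, mul_zero]

theorem exists_mem_support_of_altSubsetSum_eval_ne_zero [CommRing R] {f : MvPolynomial ι R}
    {S : Finset ι}
    (hf : altSubsetSum S (fun T ↦ MvPolynomial.eval ((T : Set ι).indicator 1) f) ≠ 0) :
    ∃ e ∈ f.support, e.support = S := by
  classical
  contrapose! hf
  calc altSubsetSum S (fun T ↦ MvPolynomial.eval ((T : Set ι).indicator 1) f)
      = ∑ e ∈ f.support, f.coeff e *
          altSubsetSum S (fun T ↦ if e.support ⊆ T then 1 else 0) := by
        simp only [altSubsetSum, MvPolynomial.eval_eq, prod_indicator_pow_eq_ite, mul_sum]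
        rw [sum_comm]
        simp only [mul_left_comm]
    _ = 0 := sum_eq_zero fun e he ↦ by
        rw [altSubsetSum_subset_indicator_eq_zero (hf e he), mul_zero]

theorem two_pow_card_le_card_support_of_altSubsetSum_ne_zero [Fintype ι] [CommRing R]
    {f : MvPolynomial ι R}
    (hf : ∀ S : Finset ι, altSubsetSum S
      (fun T ↦ MvPolynomial.eval ((T : Set ι).indicator 1) f) ≠ 0) :
    2 ^ Fintype.card ι ≤ #f.support := by
  have hsurj : Set.SurjOn Finsupp.support (f.support : Set (ι →₀ ℕ))
      (univ : Finset (Finset ι)) := fun S _ ↦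
    exists_mem_support_of_altSubsetSum_eval_ne_zero (hf S)
  simpa [Fintype.card_finset] using card_le_card_of_surjOn _ hsurj

end AlternatingSubsetSums

section PartialFractions

open Finset Polynomial

variable {ι K : Type*} [Field K]

/-- The numerator of the rational function `∑ j ∈ I, c j / (X - d j) - k` over the common
denominator `∏ j ∈ I, (X - d j)`. -/
noncomputable def partialFractionNumerator [DecidableEq ι] (I : Finset ι) (c d : ι → K) (k : K) :
    K[X] :=
  ∑ j ∈ I, C (c j) * Lagrange.nodal (I.erase j) d - C k * Lagrange.nodal I d

theorem natDegree_partialFractionNumerator_le [DecidableEq ι] (I : Finset ι) (c d : ι → K)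
    (k : K) : (partialFractionNumerator I c d k).natDegree ≤ #I := by
  refine (natDegree_sub_le _ _).trans (max_le ?_ ?_)
  · refine natDegree_sum_le_of_forall_le _ _ fun j _ ↦ (natDegree_C_mul_le _ _).trans ?_
    rw [Lagrange.natDegree_nodal]
    exact card_le_card (erase_subset j I)
  · exact (natDegree_C_mul_le _ _).trans Lagrange.natDegree_nodal.le

theorem partialFractionNumerator_ne_zero [DecidableEq ι] {I : Finset ι} {c d : ι → K} {j : ι}
    (hj : j ∈ I) (hc : c j ≠ 0) (hd : ∀ i ∈ I, i ≠ j → d i ≠ d j) (k : K) :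
    partialFractionNumerator I c d k ≠ 0 := by
  have heval : (partialFractionNumerator I c d k).eval (d j) =
      c j * (Lagrange.nodal (I.erase j) d).eval (d j) := by
    rw [partialFractionNumerator, eval_sub, eval_finsetSum, eval_mul,
      Lagrange.eval_nodal_at_node hj, mul_zero, sub_zero, sum_eq_single_of_mem j hj, eval_mul,
      eval_C]
    intro i _ hij
    rw [eval_mul, Lagrange.eval_nodal_at_node (mem_erase.mpr ⟨hij.symm, hj⟩), mul_zero]
  have hnodal : (Lagrange.nodal (I.erase j) d).eval (d j) ≠ 0 :=
    Lagrange.eval_nodal_not_at_node fun i hi ↦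
      (hd i (mem_of_mem_erase hi) (ne_of_mem_erase hi)).symm
  intro hzero
  rw [hzero, eval_zero] at heval
  exact mul_ne_zero hc hnodal heval.symm

theorem eval_partialFractionNumerator [DecidableEq ι] {I : Finset ι} {d : ι → K} {t : K}
    (ht : ∀ j ∈ I, t ≠ d j) (c : ι → K) (k : K) :
    (partialFractionNumerator I c d k).eval t =
      (∑ j ∈ I, c j * (t - d j)⁻¹ - k) * (Lagrange.nodal I d).eval t := by
  simp only [partialFractionNumerator, eval_sub, eval_finsetSum, eval_mul, eval_C, sub_mul,
    sum_mul]
  congr 1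
  refine sum_congr rfl fun j hj ↦ ?_
  rw [Lagrange.nodal_eq_mul_nodal_erase hj, eval_mul, eval_sub, eval_X, eval_C, mul_assoc,
    inv_mul_cancel_left₀ (sub_ne_zero.mpr (ht j hj))]

theorem card_filter_sum_mul_inv_sub_eq_le [DecidableEq K] {I : Finset ι} {c d : ι → K} {j : ι}
    (hj : j ∈ I) (hc : c j ≠ 0) (hd : ∀ i ∈ I, i ≠ j → d i ≠ d j) (k : K) (W : Finset K) :
    #{t ∈ W | (∀ i ∈ I, t ≠ d i) ∧ ∑ i ∈ I, c i * (t - d i)⁻¹ = k} ≤ #I := by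
  classical
  refine (card_le_degree_of_subset_roots fun t ht ↦ ?_).trans
    (natDegree_partialFractionNumerator_le I c d k)
  obtain ⟨-, hpole, hsum⟩ := mem_filter.mp ht
  rw [mem_roots (partialFractionNumerator_ne_zero hj hc hd k), IsRoot,
    eval_partialFractionNumerator hpole, hsum, sub_self, zero_mul]

end PartialFractions

section GenericCoefficients

open Finset

variable {ι K : Type*} [Field K]

/-- The coefficients `α` are generic on `s` with respect to `β` if the subset sums of `α` over `s`
avoid `β`, the nonempty ones avoid `0`, and the alternating sums of the values of
`1 / (∑ αᵢ xᵢ - β)` on the vertices of the cube below `S` are nonzero for all `S ⊆ s`. -/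
structure IsGenericOn (β : K) (α : ι → K) (s : Finset ι) : Prop where
  sum_ne_zero : ∀ T ⊆ s, T.Nonempty → ∑ i ∈ T, α i ≠ 0
  sum_ne : ∀ T ⊆ s, ∑ i ∈ T, α i ≠ β
  altSubsetSum_ne_zero : ∀ S ⊆ s, altSubsetSum S (fun T ↦ (∑ i ∈ T, α i - β)⁻¹) ≠ 0

variable {β : K} {α : ι → K} {s : Finset ι}

theorem isGenericOn_empty (hβ : β ≠ 0) (α : ι → K) : IsGenericOn β α ∅ where
  sum_ne_zero T hT hne := absurd (subset_empty.mp hT) hne.ne_empty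
  sum_ne T hT := by simpa [subset_empty.mp hT] using hβ.symm
  altSubsetSum_ne_zero S hS := by simpa [subset_empty.mp hS, altSubsetSum] using hβ

theorem forall_subset_insert_iff [DecidableEq ι] {a : ι} {P : Finset ι → Prop} :
    (∀ T ⊆ insert a s, P T) ↔ (∀ T ⊆ s, P T) ∧ ∀ T ⊆ s, P (insert a T) := by
  simp only [← mem_powerset, powerset_insert, forall_mem_union, forall_mem_image]

theorem IsGenericOn.update_insert [DecidableEq ι] (hα : IsGenericOn β α s) {a : ι} (ha : a ∉ s)
    {t : K} (hzero : ∀ T ⊆ s, t + ∑ i ∈ T, α i ≠ 0) (hne : ∀ T ⊆ s, t + ∑ i ∈ T, α i ≠ β)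
    (halt : ∀ S ⊆ s, altSubsetSum S (fun T ↦ (t + ∑ i ∈ T, α i - β)⁻¹) ≠
      altSubsetSum S (fun T ↦ (∑ i ∈ T, α i - β)⁻¹)) :
    IsGenericOn β (Function.update α a t) (insert a s) := by
  have hsum : ∀ T ⊆ s, ∑ i ∈ T, Function.update α a t i = ∑ i ∈ T, α i := fun T hT ↦
    sum_update_of_notMem (fun h ↦ ha (hT h)) α t
  have hsum_insert : ∀ T ⊆ s,
      ∑ i ∈ insert a T, Function.update α a t i = t + ∑ i ∈ T, α i := fun T hT ↦ by
    rw [sum_insert fun h ↦ ha (hT h), Function.update_self, hsum T hT]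
  have halt_old : ∀ S ⊆ s, altSubsetSum S (fun T ↦ (∑ i ∈ T, Function.update α a t i - β)⁻¹) =
      altSubsetSum S (fun T ↦ (∑ i ∈ T, α i - β)⁻¹) := fun S hS ↦
    altSubsetSum_congr fun T hT ↦ by rw [hsum T (hT.trans hS)]
  have halt_new : ∀ S ⊆ s,
      altSubsetSum S (fun T ↦ (∑ i ∈ insert a T, Function.update α a t i - β)⁻¹) =
        altSubsetSum S (fun T ↦ (t + ∑ i ∈ T, α i - β)⁻¹) := fun S hS ↦
    altSubsetSum_congr fun T hT ↦ by rw [hsum_insert T (hT.trans hS)]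
  constructor <;> refine forall_subset_insert_iff.mpr ⟨fun T hT ↦ ?_, fun T hT ↦ ?_⟩
  · rw [hsum T hT]
    exact hα.sum_ne_zero T hT
  · rw [hsum_insert T hT]
    exact fun _ ↦ hzero T hT
  · rw [hsum T hT]
    exact hα.sum_ne T hT
  · rw [hsum_insert T hT]
    exact hne T hT
  · rw [halt_old T hT]
    exact hα.altSubsetSum_ne_zero T hT
  · rw [altSubsetSum_insert fun h ↦ ha (hT h), halt_old T hT, halt_new T hT]
    exact sub_ne_zero.mpr (halt T hT).symm

theorem card_filter_altSubsetSum_inv_eq_le [DecidableEq K] {S : Finset ι}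
    (hα : ∀ T ⊆ S, T.Nonempty → ∑ i ∈ T, α i ≠ 0) (β k : K) (W : Finset K) :
    #{t ∈ W | (∀ T ⊆ S, t + ∑ i ∈ T, α i ≠ β) ∧
      altSubsetSum S (fun T ↦ (t + ∑ i ∈ T, α i - β)⁻¹) = k} ≤ 2 ^ #S := by
  classical
  have hpoles : ∀ T ∈ S.powerset, T ≠ ∅ → β - ∑ i ∈ T, α i ≠ β - ∑ i ∈ ∅, α i := by
    intro T hT hne
    simpa using hα T (mem_powerset.mp hT) (nonempty_iff_ne_empty.mpr hne)
  have hcard := card_filter_sum_mul_inv_sub_eq_le (c := fun T ↦ (-1) ^ #T)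
    (empty_mem_powerset S) (by simp) hpoles k W
  simpa only [altSubsetSum, card_powerset, mem_powerset, ne_eq, eq_sub_iff_add_eq,
    sub_sub_eq_add_sub] using hcard

theorem two_pow_add_two_pow_add_sum_powerset_le (s : Finset ι) :
    2 ^ #s + 2 ^ #s + ∑ S ∈ s.powerset, 2 ^ #S ≤ 3 ^ (#s + 1) := by
  have hsum : ∑ S ∈ s.powerset, 2 ^ #S = 3 ^ #s := by
    simpa using sum_pow_mul_eq_add_pow (2 : ℕ) 1 s
  have hpow : 2 ^ #s ≤ 3 ^ #s := Nat.pow_le_pow_left (by norm_num) _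
  rw [hsum, pow_succ]
  omega

theorem IsGenericOn.exists_update_insert [DecidableEq ι] (hα : IsGenericOn β α s) {a : ι}
    (ha : a ∉ s) {W : Finset K} (hW : 3 ^ (#s + 1) < #W) :
    ∃ t ∈ W, IsGenericOn β (Function.update α a t) (insert a s) := by
  classical
  let zeroSums := s.powerset.image fun T ↦ -∑ i ∈ T, α i
  let poles := s.powerset.image fun T ↦ β - ∑ i ∈ T, α i
  let cancellations (S : Finset ι) := {t ∈ W | (∀ T ⊆ S, t + ∑ i ∈ T, α i ≠ β) ∧
    altSubsetSum S (fun T ↦ (t + ∑ i ∈ T, α i - β)⁻¹) =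
      altSubsetSum S (fun T ↦ (∑ i ∈ T, α i - β)⁻¹)}
  have hcard : #(zeroSums ∪ poles ∪ s.powerset.biUnion cancellations) < #W := calc
    _ ≤ 2 ^ #s + 2 ^ #s + ∑ S ∈ s.powerset, 2 ^ #S := by
      refine (card_union_le _ _).trans (add_le_add ((card_union_le _ _).trans
        (add_le_add ?_ ?_)) (card_biUnion_le.trans (sum_le_sum fun S hS ↦ ?_)))
      · exact card_image_le.trans (card_powerset s).le
      · exact card_image_le.trans (card_powerset s).le
      · exact card_filter_altSubsetSum_inv_eq_le
          (fun T hT ↦ hα.sum_ne_zero T (hT.trans (mem_powerset.mp hS))) β _ W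
    _ ≤ 3 ^ (#s + 1) := two_pow_add_two_pow_add_sum_powerset_le s
    _ < #W := hW
  obtain ⟨t, htW, ht⟩ := exists_mem_notMem_of_card_lt_card hcard
  simp only [mem_union, not_or] at ht
  obtain ⟨⟨hzero, hpole⟩, hcancel⟩ := ht
  have hne : ∀ T ⊆ s, t + ∑ i ∈ T, α i ≠ β := fun T hT h ↦
    hpole (mem_image.mpr ⟨T, mem_powerset.mpr hT, (eq_sub_of_add_eq h).symm⟩)
  refine ⟨t, htW, hα.update_insert ha (fun T hT h ↦ ?_) hne fun S hS h ↦ ?_⟩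
  · exact hzero (mem_image.mpr ⟨T, mem_powerset.mpr hT, (eq_neg_of_add_eq_zero_left h).symm⟩)
  · exact hcancel (mem_biUnion.mpr ⟨S, mem_powerset.mpr hS,
      mem_filter.mpr ⟨htW, fun T hT ↦ hne T (hT.trans hS), h⟩⟩)

theorem exists_isGenericOn (hβ : β ≠ 0) {W : Finset K} (s : Finset ι) (hW : 3 ^ #s < #W) :
    ∃ α : ι → K, (∀ i, α i ∈ W) ∧ IsGenericOn β α s := by
  classical
  induction s using Finset.induction_on with
  | empty =>
    obtain ⟨w, hw⟩ : W.Nonempty := card_pos.mp ((Nat.zero_le _).trans_lt hW)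
    exact ⟨fun _ ↦ w, fun _ ↦ hw, isGenericOn_empty hβ _⟩
  | insert a s ha ih =>
    rw [card_insert_of_notMem ha] at hW
    obtain ⟨α, hαW, hα⟩ := ih ((Nat.pow_le_pow_right (by norm_num) (Nat.le_succ _)).trans_lt hW)
    obtain ⟨t, htW, ht⟩ := hα.exists_update_insert ha hW
    refine ⟨Function.update α a t, fun i ↦ ?_, ht⟩
    rcases eq_or_ne i a with rfl | hi
    · simpa using htW
    · simpa [hi] using hαW i

theorem IsGenericOn.two_pow_card_le_card_support [Fintype ι] (hα : IsGenericOn β α univ)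
    {f : MvPolynomial ι K}
    (hf : ∀ a : ι → K, (∀ i, a i = 0 ∨ a i = 1) →
      MvPolynomial.eval a f * ((∑ i, α i * a i) - β) = 1) :
    2 ^ Fintype.card ι ≤ #f.support := by
  have hvertex (T : Finset ι) :
      MvPolynomial.eval ((T : Set ι).indicator 1) f = (∑ i ∈ T, α i - β)⁻¹ := by
    have h := hf ((T : Set ι).indicator 1) fun i ↦ Set.indicator_eq_zero_or_self _ _ i
    rw [sum_mul_indicator_one] at h
    exact eq_inv_of_mul_eq_one_left h
  refine two_pow_card_le_card_support_of_altSubsetSum_ne_zero fun S ↦ ?_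
  simpa only [hvertex] using hα.altSubsetSum_ne_zero S (subset_univ S)

/-- The second conjunct ensures that the polynomials `f` in the third one exist. -/
theorem sparsity_lower_bound_positive_char_general [Fintype ι] (hβ : β ≠ 0) {W : Finset K}
    (hW : 3 ^ Fintype.card ι < #W) :
    ∃ α : ι → K, (∀ i, α i ∈ W) ∧
      (∀ a : ι → K, (∀ i, a i = 0 ∨ a i = 1) → ∑ i, α i * a i ≠ β) ∧
      ∀ f : MvPolynomial ι K,
        (∀ a : ι → K, (∀ i, a i = 0 ∨ a i = 1) →
          MvPolynomial.eval a f * ((∑ i, α i * a i) - β) = 1) →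
        2 ^ Fintype.card ι ≤ #f.support := by
  classical
  obtain ⟨α, hαW, hα⟩ := exists_isGenericOn hβ univ hW
  refine ⟨α, hαW, fun a ha ↦ ?_, fun f ↦ hα.two_pow_card_le_card_support⟩
  have hindicator : a = (({i | a i = 1} : Finset ι) : Set ι).indicator 1 := by
    ext i
    rcases ha i with h | h <;> simp [h]
  rw [hindicator, sum_mul_indicator_one]
  exact hα.sum_ne _ (subset_univ _)

end GenericCoefficients

/-- Sparsity lower bound over positive characteristic: for `n ≥ 8`,
`p` prime, `p^k > 2^{2n}`, a finite field `F'` of size `p^{2k}` with subfield `F` of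
size `p^k`, and `β ∈ F' \ F`, there is an `α ∈ F^n` so that every polynomial `f`
agreeing with `1/(∑ i, α i * x i - β)` on the Boolean cube has at least `2^{n/4 - 1}`
monomials. -/
theorem sparsity_lower_bound_positive_char
    (n : ℕ) (hn : 8 ≤ n) (p : ℕ) (hp : p.Prime) (k : ℕ)
    (hpk : 2 ^ (2 * n) < p ^ k)
    (F' : Type*) [Field F'] [Fintype F'] (hcard : Fintype.card F' = p ^ (2 * k))
    (F : Subfield F') (hFcard : Nat.card F = p ^ k)
    (β : F') (hβ : β ∉ F) :
    ∃ α : Fin n → F', (∀ i, α i ∈ F) ∧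
      ∀ f : MvPolynomial (Fin n) F',
        (∀ a : Fin n → F', (∀ i, a i = 0 ∨ a i = 1) →
          MvPolynomial.eval a f * ((∑ i, α i * a i) - β) = 1) →
        2 ^ (n / 4 - 1) ≤ f.support.card := by
  classical
  have hW : 3 ^ Fintype.card (Fin n) < (F : Set F').toFinset.card := calc
    3 ^ Fintype.card (Fin n) ≤ 4 ^ n := by
      rw [Fintype.card_fin]
      exact Nat.pow_le_pow_left (by norm_num) n
    _ = 2 ^ (2 * n) := by rw [pow_mul]; norm_num
    _ < p ^ k := hpk
    _ = (F : Set F').toFinset.card := by rw [← hFcard, ← Set.ncard_eq_toFinset_card']; rfl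
  have hβ0 : β ≠ 0 := fun h ↦ hβ (h ▸ F.zero_mem)
  obtain ⟨α, hαF, -, hα⟩ := sparsity_lower_bound_positive_char_general hβ0 hW
  refine ⟨α, fun i ↦ Set.mem_toFinset.mp (hαF i), fun f hf ↦ ?_⟩
  have hcard : 2 ^ n ≤ f.support.card := by simpa using hα f hf
  exact (Nat.pow_le_pow_right (by norm_num) (by omega)).trans hcard
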